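/- arXiv:1610.00570 — 2 statements merged into one kernel-verified Lean document; each statement's English description precedes it below -/
import Mathlib

section
/- Assume q is even, and let ν be a vector spanning H^⊥ = {v ∈ V : B(v,w) = 0 for all w ∈ H} (then ⟨ν⟩ is the nucleus N of 𝒬 and Q(ν) ≠ 0). If R is a relative hemisystem of Q⁻(2n+1,q) with respect to 𝒬, then every 2-dimensional subspace of V containing ν contains at most one point of R; equivalently, if P and P' are the two singular points on a line through the nucleus N, then P and P' do not both belong to R (so R ∩ R^τ = ∅ for the involution τ fixing H pointwise and N linewise). -/
noncomputable section

open Module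

variable {F V : Type*} [Field F] [AddCommGroup V] [Module F V]

/-- `P` is a singular point of the quadratic form `Q`, i.e. a `1`-dimensional subspace
spanned by a nonzero singular vector. -/
def IsSingularPoint (Q : QuadraticForm F V) (P : Submodule F V) : Prop :=
  ∃ v : V, v ≠ 0 ∧ Q v = 0 ∧ P = Submodule.span F {v}

/-- A subspace is totally singular if `Q` vanishes identically on it. -/
def TotallySingular (Q : QuadraticForm F V) (W : Submodule F V) : Prop :=
  ∀ v ∈ W, Q v = 0

/-- A generator is a totally singular subspace of (vector space) dimension `n`. -/
def IsGenerator (Q : QuadraticForm F V) (n : ℕ) (g : Submodule F V) : Prop :=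
  TotallySingular Q g ∧ finrank F g = n

/-- The restriction of `Q` to the subspace `U` is nondegenerate. -/
def NondegOn (Q : QuadraticForm F V) (U : Submodule F V) : Prop :=
  ∀ v ∈ U, Q v = 0 → (∀ w ∈ U, QuadraticMap.polar (⇑Q) v w = 0) → v = 0

/-- The quadratic form `Q` is nondegenerate. -/
def Nondeg (Q : QuadraticForm F V) : Prop :=
  ∀ v : V, Q v = 0 → (∀ w : V, QuadraticMap.polar (⇑Q) v w = 0) → v = 0

/-- `Q` has Witt index `n`: every totally singular subspace has dimension at most `n`
and some totally singular subspace has dimension `n`. -/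
def HasWittIndex (Q : QuadraticForm F V) (n : ℕ) : Prop :=
  (∀ W : Submodule F V, TotallySingular Q W → finrank F W ≤ n) ∧
  ∃ W : Submodule F V, TotallySingular Q W ∧ finrank F W = n

/-- A relative `m`-ovoid with respect to the parabolic section cut out by the
hyperplane `H`: a set `R` of singular points not contained in `H` such that every
generator not contained in `H` contains exactly `m` points of `R`. -/
def IsRelativeMOvoid (Q : QuadraticForm F V) (n : ℕ) (H : Submodule F V) (m : ℕ)
    (R : Set (Submodule F V)) : Prop :=
  (∀ P ∈ R, IsSingularPoint Q P ∧ ¬ P ≤ H) ∧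
  ∀ g : Submodule F V, IsGenerator Q n g → ¬ g ≤ H → {P ∈ R | P ≤ g}.ncard = m

/-- A relative hemisystem: a relative `m`-ovoid (for some `m`) whose size equals the
number of singular points outside `H` that do not belong to it. -/
def IsRelativeHemisystem (Q : QuadraticForm F V) (n : ℕ) (H : Submodule F V)
    (R : Set (Submodule F V)) : Prop :=
  (∃ m : ℕ, IsRelativeMOvoid Q n H m R) ∧
  R.ncard = {P : Submodule F V | IsSingularPoint Q P ∧ ¬ P ≤ H ∧ P ∉ R}.ncard

/-!
Let `f` be a weight on the singular points with sum zero over each generator. Downward induction on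
the dimension of a totally singular subspace `U` shows that the sum of `f` over `U^⊥` is a fixed
negative multiple of its sum over `U`. For `U = ⟨v⟩` this says that, at singular vectors, `f` is an
eigenfunction of the operator `A` with `(A f)(v) = ∑ f(r)` over all `r ⊥ v`. Since `A² f` is a
multiple of `f`, comparing `ℓ²` norms shows that `A f` vanishes at the nonsingular vectors. Summing
`A f` over `U^⊥`, now for any subspace `U`, gives: if `f` vanishes on `U^⊥`, then `f` has sum zero
over `U`.

Apply this to the indicator of a relative `m`-ovoid `R` minus the right multiple of the indicator of
the set of all singular points off `H`. A line `L` through the nucleus has `L^⊥ ≤ H`, so `R`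
contains the same proportion of the singular points off `H` on `L` as it does globally. There are at
most two of them on `L`, hence if `R` contains two, then it contains all singular points off `H`.
-/

section Perp

open QuadraticMap Submodule

lemma mem_sup_span_singleton_comm {U : Submodule F V} {u v : V} (hu : u ∉ U) (hv : v ∉ U) :
    v ∈ U ⊔ span F {u} ↔ u ∈ U ⊔ span F {v} := by
  have h := mem_span_insert_exchange (K := F) (s := (U : Set V)) (x := u) (y := v)
  have h' := mem_span_insert_exchange (K := F) (s := (U : Set V)) (x := v) (y := u)
  simp only [span_insert, span_eq, sup_comm (span F _)] at h h'
  exact ⟨fun hvu => h' hvu hv, fun huv => h huv hu⟩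

/-- The subspace `U^⊥` of vectors orthogonal to `U` for the polar form of `Q`. -/
def perp (Q : QuadraticForm F V) (U : Submodule F V) : Submodule F V :=
  LinearMap.BilinForm.orthogonal Q.polarBilin U

variable {Q : QuadraticForm F V} {U W : Submodule F V} {u v : V} {n : ℕ}

lemma mem_perp_iff : v ∈ perp Q U ↔ ∀ u ∈ U, polar Q u v = 0 := by
  simp [perp, LinearMap.BilinForm.mem_orthogonal_iff]

lemma mem_perp_span_singleton : v ∈ perp Q (span F {u}) ↔ polar Q u v = 0 := by
  rw [mem_perp_iff]
  refine ⟨fun h => h u (mem_span_singleton_self u), fun h w hw => ?_⟩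
  obtain ⟨c, rfl⟩ := mem_span_singleton.1 hw
  rw [polar_smul_left, h, smul_zero]

lemma mem_perp_span_singleton_comm : v ∈ perp Q (span F {u}) ↔ u ∈ perp Q (span F {v}) := by
  rw [mem_perp_span_singleton, mem_perp_span_singleton, polar_comm]

lemma perp_anti (h : U ≤ W) : perp Q W ≤ perp Q U :=
  LinearMap.BilinForm.orthogonal_le h

@[simp] lemma perp_bot : perp Q ⊥ = ⊤ :=
  LinearMap.BilinForm.orthogonal_bot

lemma perp_sup : perp Q (U ⊔ W) = perp Q U ⊓ perp Q W := by
  ext v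
  refine ⟨fun h => ⟨perp_anti le_sup_left h, perp_anti le_sup_right h⟩, fun ⟨hU, hW⟩ => ?_⟩
  refine mem_perp_iff.2 fun x hx => ?_
  obtain ⟨a, ha, b, hb, rfl⟩ := mem_sup.1 hx
  rw [polar_add_left, mem_perp_iff.1 hU a ha, mem_perp_iff.1 hW b hb, add_zero]

lemma mem_perp_sup_span_singleton_comm (hu : u ∈ perp Q U) (hv : v ∈ perp Q U) :
    v ∈ perp Q (U ⊔ span F {u}) ↔ u ∈ perp Q (U ⊔ span F {v}) := by
  simp only [perp_sup, mem_inf, hu, hv, true_and]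
  exact mem_perp_span_singleton_comm

lemma finrank_perp_add_finrank [FiniteDimensional F V] (hB : Q.polarBilin.Nondegenerate)
    (U : Submodule F V) : finrank F (perp Q U) + finrank F U = finrank F V := by
  rw [perp, LinearMap.BilinForm.finrank_orthogonal hB]
  exact Nat.sub_add_cancel U.finrank_le

lemma perp_top [FiniteDimensional F V] (hB : Q.polarBilin.Nondegenerate) : perp Q ⊤ = ⊥ := by
  have h := finrank_perp_add_finrank hB ⊤
  rw [finrank_top] at h
  exact finrank_eq_zero.1 (by omega)

lemma map_add_eq_of_mem_perp (hu : u ∈ U) (hv : v ∈ perp Q U) : Q (u + v) = Q u + Q v := by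
  rw [QuadraticMap.map_add (⇑Q), mem_perp_iff.1 hv u hu, add_zero]

lemma totallySingular_span_singleton (hv : Q v = 0) : TotallySingular Q (span F {v}) := by
  intro x hx
  obtain ⟨c, rfl⟩ := mem_span_singleton.1 hx
  rw [QuadraticMap.map_smul, hv, smul_zero]

namespace TotallySingular

lemma le_perp (hU : TotallySingular Q U) : U ≤ perp Q U := by
  intro v hv
  rw [mem_perp_iff]
  intro u hu
  rw [polar, hU _ (U.add_mem hu hv), hU u hu, hU v hv, sub_zero, sub_zero]

lemma sup_span_singleton (hU : TotallySingular Q U) (hv : v ∈ perp Q U) (hQv : Q v = 0) :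
    TotallySingular Q (U ⊔ span F {v}) := by
  intro x hx
  obtain ⟨u, hu, w, hw, rfl⟩ := mem_sup.1 hx
  have hwU : w ∈ perp Q U := (span_singleton_le_iff_mem v _).2 hv hw
  rw [map_add_eq_of_mem_perp hu hwU, hU u hu, totallySingular_span_singleton hQv w hw, add_zero]

end TotallySingular

lemma IsGenerator.mem_of_mem_perp [FiniteDimensional F V] (hW : IsGenerator Q n W)
    (hQw : HasWittIndex Q n) (hv : v ∈ perp Q W) (hQv : Q v = 0) : v ∈ W := by
  by_contra hvW
  have h := hQw.1 _ (hW.1.sup_span_singleton hv hQv)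
  rw [finrank_sup_span_singleton hvW, hW.2] at h
  omega

/- A vector `r` of the radical satisfies `2 Q(r) = 0`, so `Q` can only fail to vanish on it in
characteristic two, where every scalar is a square: adding multiples of `r` then makes each vector
of `W^⊥` singular, so that `W^⊥ = W + ⟨r⟩` is too small for a generator `W`. -/
lemma HasWittIndex.polarBilin_nondegenerate [Finite F] [FiniteDimensional F V]
    (hQw : HasWittIndex Q n) (hQ : Nondeg Q) (hV : 2 * n + 2 ≤ finrank F V) :
    Q.polarBilin.Nondegenerate := by
  have := Fintype.ofFinite F
  suffices hrad : ∀ r, (∀ w, polar Q r w = 0) → r = 0 from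
    ⟨fun r hr => hrad r hr, fun r hr => hrad r fun w => by rw [polar_comm]; exact hr w⟩
  intro r hr
  by_contra hr0
  have hQr : Q r ≠ 0 := fun h => hr0 (hQ r h hr)
  have hchar : ringChar F = 2 := by
    have h2 : (2 : F) * Q r = 0 := by simpa [polar_self] using hr r
    have h2' : ((2 : ℕ) : F) = 0 := by exact_mod_cast (mul_eq_zero.1 h2).resolve_right hQr
    exact CharP.ringChar_of_prime_eq_zero Nat.prime_two h2'
  obtain ⟨W, hW⟩ := hQw.2
  have hrW : ∀ t : F, t • r ∈ perp Q W := fun t =>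
    (perp Q W).smul_mem t (mem_perp_iff.2 fun u _ => by rw [polar_comm]; exact hr u)
  have hle : perp Q W ≤ W ⊔ span F {r} := by
    intro x hx
    obtain ⟨t, ht⟩ := FiniteField.isSquare_of_char_two hchar (-Q x / Q r)
    have hsing : Q (x + t • r) = 0 := by
      rw [QuadraticMap.map_add (⇑Q), polar_smul_right, polar_comm, hr, QuadraticMap.map_smul, ← ht]
      simp [hQr]
    have hmem : x + t • r ∈ W := IsGenerator.mem_of_mem_perp hW hQw (add_mem hx (hrW t)) hsing
    rw [← add_sub_cancel_right x (t • r)]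
    exact sub_mem (mem_sup_left hmem) (mem_sup_right (smul_mem _ t (mem_span_singleton_self r)))
  have hrank := finrank_mono hle
  rw [finrank_sup_span_singleton fun h => hQr (hW.1 r h), hW.2] at hrank
  have hdim := LinearMap.BilinForm.finrank_add_finrank_orthogonal' (B := Q.polarBilin) W
  rw [perp] at hrank
  omega

end Perp

section Counting

open QuadraticMap Submodule Finset
open scoped Classical

variable [Fintype V] {Q : QuadraticForm F V} {U : Submodule F V} {v : V} {n e k : ℕ}

/-- The singular vectors orthogonal to `U`, the zero vector included. -/
def singularPerp (Q : QuadraticForm F V) (U : Submodule F V) : Finset V :=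
  {v | v ∈ perp Q U ∧ Q v = 0}

lemma mem_singularPerp : v ∈ singularPerp Q U ↔ v ∈ perp Q U ∧ Q v = 0 := by
  simp [singularPerp]

lemma TotallySingular.mem_singularPerp_of_mem (hU : TotallySingular Q U) (hv : v ∈ U) :
    v ∈ singularPerp Q U :=
  mem_singularPerp.2 ⟨hU.le_perp hv, hU v hv⟩

/-- The vectors `r` extending the totally singular subspace `U`, i.e. those for which `U + ⟨r⟩` is
a totally singular subspace properly containing `U`. -/
def extendingVectors (Q : QuadraticForm F V) (U : Submodule F V) : Finset V :=
  {v ∈ singularPerp Q U | v ∉ U}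

lemma mem_extendingVectors :
    v ∈ extendingVectors Q U ↔ (v ∈ perp Q U ∧ Q v = 0) ∧ v ∉ U := by
  rw [extendingVectors, mem_filter, mem_singularPerp]

lemma TotallySingular.sup_extendingVector (hU : TotallySingular Q U)
    (hv : v ∈ extendingVectors Q U) : TotallySingular Q (U ⊔ span F {v}) :=
  hU.sup_span_singleton (mem_extendingVectors.1 hv).1.1 (mem_extendingVectors.1 hv).1.2

variable [Fintype F]

lemma card_mul_card_fiber {M : Type*} [AddCommGroup M] [Module F M] [Fintype M]
    {l : M →ₗ[F] F} (hl : l ≠ 0) (c : F) :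
    Fintype.card F * #{x | l x = c} = Fintype.card M := by
  have hrange : ∀ d : F, d ∈ Set.range l := LinearMap.surjective hl
  calc Fintype.card F * #{x | l x = c} = ∑ d : F, #{x | l x = d} := by
        rw [sum_congr rfl fun d _ =>
            AddMonoidHom.card_fiber_eq_of_mem_range l (hrange d) (hrange c),
          sum_const, smul_eq_mul, card_univ]
    _ = Fintype.card M := (card_eq_sum_card_fiberwise fun _ _ => mem_univ _).symm

lemma card_filter_mem_submodule (U : Submodule F V) :
    #{v | v ∈ U} = Fintype.card F ^ finrank F U := by
  rw [← Module.card_eq_pow_finrank (K := F) (V := U), Fintype.card_subtype]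

lemma card_filter_notMem_add {A : Finset V} (hA : ∀ v ∈ U, v ∈ A) :
    #{v ∈ A | v ∉ U} + Fintype.card F ^ finrank F U = #A := by
  have hmem : {v ∈ A | v ∈ U} = ({v | v ∈ U} : Finset V) := by
    ext v
    simpa using hA v
  rw [← card_filter_add_card_filter_not (s := A) (· ∈ U), hmem, card_filter_mem_submodule, add_comm]

lemma TotallySingular.card_extendingVectors (hU : TotallySingular Q U) :
    #(extendingVectors Q U) + Fintype.card F ^ finrank F U = #(singularPerp Q U) :=
  card_filter_notMem_add fun _ => hU.mem_singularPerp_of_mem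

lemma TotallySingular.card_mul_card_translate (hU : TotallySingular Q U) (v : V) :
    Fintype.card F * #{u : U | Q (u + v) = 0} + Fintype.card U * (if v ∈ perp Q U then 1 else 0) =
      Fintype.card U * (Fintype.card F * (if v ∈ singularPerp Q U then 1 else 0) + 1) := by
  by_cases hv : v ∈ perp Q U
  · have hQ : ∀ u : U, Q (u + v) = Q v := fun u => by
      rw [map_add_eq_of_mem_perp u.2 hv, hU u u.2, zero_add]
    by_cases hQv : Q v = 0 <;> simp [mem_singularPerp, hv, hQ, hQv]
    ring
  · let l : U →ₗ[F] F := (Q.polarBilin v).comp U.subtype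
    have hl : l ≠ 0 := fun h => hv <| mem_perp_iff.2 fun u hu => by
      rw [polar_comm]
      exact LinearMap.congr_fun h ⟨u, hu⟩
    have hfiber : ∀ u : U, Q (u + v) = 0 ↔ l u = -Q v := fun u => by
      rw [QuadraticMap.map_add (⇑Q), hU u u.2, zero_add, add_comm, polar_comm,
        ← eq_neg_iff_add_eq_zero]
      rfl
    simp [mem_singularPerp, hv, hfiber, card_mul_card_fiber hl]

/- Both sides count the pairs `(u, v) ∈ U × V` with `u + v` singular. -/
lemma TotallySingular.card_singular (hU : TotallySingular Q U) :
    Fintype.card F * #{v | Q v = 0} + Fintype.card F ^ finrank F (perp Q U) =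
      Fintype.card F * #(singularPerp Q U) + Fintype.card F ^ finrank F V := by
  have htranslate : ∑ v : V, #{u : U | Q (u + v) = 0} = Fintype.card U * #{v | Q v = 0} := by
    simp only [card_filter]
    rw [sum_comm, ← card_univ, ← smul_eq_mul, ← sum_const]
    exact sum_congr rfl fun u _ =>
      Equiv.sum_comp (Equiv.addLeft (u : V)) (fun v => if Q v = 0 then 1 else 0)
  have hsum := sum_congr rfl fun v (_ : v ∈ univ) => hU.card_mul_card_translate v
  simp only [sum_add_distrib, ← mul_sum, htranslate, sum_boole, card_filter_mem_submodule,
    sum_const, card_univ, filter_univ_mem, Nat.cast_id, smul_eq_mul, mul_one] at hsum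
  rw [← Module.card_eq_pow_finrank (K := F) (V := V)]
  refine Nat.eq_of_mul_eq_mul_left (Fintype.card_pos (α := U)) ?_
  linarith

/- The case of a generator `W` gives the total number of singular vectors, as the only singular
vectors of `W^⊥` are those of `W`. -/
lemma TotallySingular.card_singularPerp (hU : TotallySingular Q U) (hUk : finrank F U + k = n)
    (hV : finrank F V = 2 * n + e + 1) (hQw : HasWittIndex Q n)
    (hB : Q.polarBilin.Nondegenerate) :
    (#(singularPerp Q U) : ℚ) = (Fintype.card F : ℚ) ^ n + (Fintype.card F : ℚ) ^ (n + e + k) -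
      (Fintype.card F : ℚ) ^ (n + e) := by
  obtain ⟨W, hW⟩ := hQw.2
  have hWperp : singularPerp Q W = ({v | v ∈ W} : Finset V) := by
    ext v
    simp only [mem_filter_univ]
    exact ⟨fun h => IsGenerator.mem_of_mem_perp hW hQw (mem_singularPerp.1 h).1
      (mem_singularPerp.1 h).2, hW.1.mem_singularPerp_of_mem⟩
  have hcountU := hU.card_singular
  have hcountW := hW.1.card_singular
  have hrankU : finrank F (perp Q U) = n + e + k + 1 := by
    have := finrank_perp_add_finrank hB U
    omega
  have hrankW : finrank F (perp Q W) = n + e + 1 := by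
    have := finrank_perp_add_finrank hB W
    omega
  rw [hrankU] at hcountU
  rw [hWperp, card_filter_mem_submodule, hW.2, hrankW] at hcountW
  have hq : (Fintype.card F : ℚ) ≠ 0 := mod_cast Fintype.card_ne_zero
  refine mul_left_cancel₀ hq ?_
  qify at hcountU hcountW
  linear_combination hcountW - hcountU

end Counting

section SubspaceSums

open QuadraticMap Submodule Finset
open scoped Classical

variable [Fintype V]

/-- The sum of a weight `f` on the vectors of `V` over the vectors of the subspace `U`. -/
def sumOn (f : V → ℚ) (U : Submodule F V) : ℚ :=
  ∑ v with v ∈ U, f v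

variable {Q : QuadraticForm F V} {f : V → ℚ} {U : Submodule F V} {v : V}

lemma sumOn_eq_sum_ite (f : V → ℚ) (U : Submodule F V) :
    sumOn f U = ∑ v, if v ∈ U then f v else 0 :=
  sum_filter _ _

@[simp] lemma sumOn_bot (f : V → ℚ) : sumOn f (⊥ : Submodule F V) = f 0 := by
  simp [sumOn_eq_sum_ite]

lemma sumOn_eq_zero (h : ∀ v ∈ U, f v = 0) : sumOn f U = 0 :=
  sum_eq_zero fun v hv => h v (mem_filter.1 hv).2

lemma sumOn_sub_mul (f g : V → ℚ) (c : ℚ) (U : Submodule F V) :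
    sumOn (fun v => f v - c * g v) U = sumOn f U - c * sumOn g U := by
  simp only [sumOn, sum_sub_distrib, mul_sum]

lemma sum_sumOn {ι : Type*} (A : Finset ι) (W : ι → Submodule F V) (f : V → ℚ) :
    ∑ i ∈ A, sumOn f (W i) = ∑ v, f v * #{i ∈ A | v ∈ W i} := by
  simp only [sumOn_eq_sum_ite, card_filter, Nat.cast_sum, mul_sum]
  rw [sum_comm]
  simp

lemma sum_extendingVectors_sumOn (hU : TotallySingular Q U) (hf : ∀ v, Q v ≠ 0 → f v = 0)
    {W : V → Submodule F V} {N : ℚ} (hUW : ∀ r ∈ extendingVectors Q U, U ≤ W r)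
    (hWU : ∀ r ∈ extendingVectors Q U, W r ≤ perp Q U)
    (hN : ∀ s ∈ extendingVectors Q U, (#{r ∈ extendingVectors Q U | s ∈ W r} : ℚ) = N) :
    ∑ r ∈ extendingVectors Q U, sumOn f (W r) =
      N * sumOn f (perp Q U) + (#(extendingVectors Q U) - N) * sumOn f U := by
  rw [sum_sumOn, sumOn_eq_sum_ite, sumOn_eq_sum_ite, mul_sum, mul_sum, ← sum_add_distrib]
  refine sum_congr rfl fun s _ => ?_
  by_cases hsU : s ∈ U
  · rw [filter_true_of_mem fun r hr => hUW r hr hsU, if_pos hsU, if_pos (hU.le_perp hsU)]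
    ring
  by_cases hs : s ∈ perp Q U
  · by_cases hQs : Q s = 0
    · rw [hN s (mem_extendingVectors.2 ⟨⟨hs, hQs⟩, hsU⟩), if_neg hsU, if_pos hs]
      ring
    · simp [hf s hQs]
  · rw [filter_false_of_mem fun r hr hsr => hs (hWU r hr hsr), if_neg hsU, if_neg hs]
    simp

variable [Fintype F]

lemma sumOn_span_singleton (hf0 : f 0 = 0) (hf : ∀ (c : F) v, c ≠ 0 → f (c • v) = f v) (v : V) :
    sumOn f (span F {v}) = (Fintype.card F - 1) * f v := by
  rcases eq_or_ne v 0 with rfl | hv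
  · simp [hf0]
  have himage : ({w | w ∈ span F {v}} : Finset V) = univ.image (fun c : F => c • v) := by
    ext w
    simp [mem_span_singleton]
  rw [sumOn, himage, sum_image (smul_left_injective F hv).injOn,
    ← add_sum_erase univ _ (mem_univ (0 : F)), zero_smul, hf0, zero_add,
    sum_congr rfl fun c hc => hf c v (ne_of_mem_erase hc), sum_const, nsmul_eq_mul,
    card_erase_of_mem (mem_univ _), card_univ, Nat.cast_pred Fintype.card_pos]

lemma sum_extendingVectors_sumOn_sup (hU : TotallySingular Q U) (hf : ∀ v, Q v ≠ 0 → f v = 0) :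
    ∑ r ∈ extendingVectors Q U, sumOn f (U ⊔ span F {r}) =
      ((Fintype.card F : ℚ) ^ (finrank F U + 1) - (Fintype.card F : ℚ) ^ finrank F U) *
          sumOn f (perp Q U) +
        (#(singularPerp Q U) - (Fintype.card F : ℚ) ^ (finrank F U + 1)) * sumOn f U := by
  have hTS := fun r (hr : r ∈ extendingVectors Q U) => hU.sup_extendingVector hr
  have hperp : ∀ r ∈ extendingVectors Q U, U ⊔ span F {r} ≤ perp Q U := fun r hr =>
    (hTS r hr).le_perp.trans (perp_anti le_sup_left)
  have hN : ∀ s ∈ extendingVectors Q U,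
      (#{r ∈ extendingVectors Q U | s ∈ U ⊔ span F {r}} : ℚ) =
        (Fintype.card F : ℚ) ^ (finrank F U + 1) - (Fintype.card F : ℚ) ^ finrank F U := by
    intro s hs
    have hsU := (mem_extendingVectors.1 hs).2
    have hfilter : {r ∈ extendingVectors Q U | s ∈ U ⊔ span F {r}} =
        {r ∈ ({r | r ∈ U ⊔ span F {s}} : Finset V) | r ∉ U} := by
      ext r
      simp only [mem_filter, mem_univ, true_and, mem_extendingVectors]
      refine ⟨fun ⟨⟨_, hr⟩, hsr⟩ => ⟨(mem_sup_span_singleton_comm hr hsU).1 hsr, hr⟩,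
        fun ⟨hrs, hr⟩ => ⟨⟨⟨hperp s hs hrs, hTS s hs r hrs⟩, hr⟩,
          (mem_sup_span_singleton_comm hr hsU).2 hrs⟩⟩
    have hcount := (card_filter_notMem_add (U := U) fun v hv => (mem_filter_univ v).2
      (mem_sup_left hv)).trans (card_filter_mem_submodule (U ⊔ span F {s}))
    rw [finrank_sup_span_singleton hsU] at hcount
    rw [hfilter, eq_sub_iff_add_eq]
    exact_mod_cast hcount
  have hcard : (#(extendingVectors Q U) : ℚ) + (Fintype.card F : ℚ) ^ finrank F U =
      #(singularPerp Q U) := mod_cast hU.card_extendingVectors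
  rw [sum_extendingVectors_sumOn hU hf (fun _ _ => le_sup_left) hperp hN, ← hcard]
  ring

lemma sum_extendingVectors_sumOn_perp_sup (hU : TotallySingular Q U)
    (hf : ∀ v, Q v ≠ 0 → f v = 0) {N : ℚ}
    (hN : ∀ s ∈ extendingVectors Q U, (#(singularPerp Q (U ⊔ span F {s})) : ℚ) = N) :
    ∑ r ∈ extendingVectors Q U, sumOn f (perp Q (U ⊔ span F {r})) =
      (N - (Fintype.card F : ℚ) ^ finrank F U) * sumOn f (perp Q U) +
        (#(singularPerp Q U) - N) * sumOn f U := by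
  have hTS := fun r (hr : r ∈ extendingVectors Q U) => hU.sup_extendingVector hr
  have hN' : ∀ s ∈ extendingVectors Q U,
      (#{r ∈ extendingVectors Q U | s ∈ perp Q (U ⊔ span F {r})} : ℚ) =
        N - (Fintype.card F : ℚ) ^ finrank F U := by
    intro s hs
    have hsperp := (mem_extendingVectors.1 hs).1.1
    have hfilter : {r ∈ extendingVectors Q U | s ∈ perp Q (U ⊔ span F {r})} =
        {r ∈ singularPerp Q (U ⊔ span F {s}) | r ∉ U} := by
      ext r
      simp only [mem_filter, mem_extendingVectors, mem_singularPerp]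
      refine ⟨fun ⟨⟨⟨hr, hQr⟩, hrU⟩, hsr⟩ =>
          ⟨⟨(mem_perp_sup_span_singleton_comm hr hsperp).1 hsr, hQr⟩, hrU⟩,
        fun ⟨⟨hrs, hQr⟩, hrU⟩ => ?_⟩
      have hr := perp_anti le_sup_left hrs
      exact ⟨⟨⟨hr, hQr⟩, hrU⟩, (mem_perp_sup_span_singleton_comm hr hsperp).2 hrs⟩
    rw [hfilter, eq_sub_iff_add_eq, ← hN s hs]
    exact_mod_cast card_filter_notMem_add fun v hv =>
      (hTS s hs).mem_singularPerp_of_mem (mem_sup_left hv)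
  have hcard : (#(extendingVectors Q U) : ℚ) + (Fintype.card F : ℚ) ^ finrank F U =
      #(singularPerp Q U) := mod_cast hU.card_extendingVectors
  rw [sum_extendingVectors_sumOn hU hf
    (fun r hr => le_sup_left.trans (hTS r hr).le_perp) (fun _ _ => perp_anti le_sup_left) hN',
    ← hcard]
  ring

/- Inverting the order of summation, `r` runs over the vectors with `v ∈ (U + ⟨r⟩)^⊥`; this
subspace is `U^⊥` or a hyperplane of it, according to whether `r` lies in `U`. -/
lemma card_mul_sum_perp_sumOn_perp (hB : Q.polarBilin.Nondegenerate) (f : V → ℚ)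
    (U : Submodule F V) :
    Fintype.card F * ∑ v with v ∈ perp Q U, sumOn f (perp Q (span F {v})) =
      (Fintype.card F : ℚ) ^ finrank F (perp Q U) *
        (sumOn f (⊤ : Submodule F V) + (Fintype.card F - 1) * sumOn f U) := by
  have hfilter : ∀ r, ({v ∈ ({v | v ∈ perp Q U} : Finset V) | r ∈ perp Q (span F {v})}) =
      ({v | v ∈ perp Q (U ⊔ span F {r})} : Finset V) := fun r => by
    ext v
    simp only [mem_filter, mem_univ, true_and, perp_sup, Submodule.mem_inf,
      mem_perp_span_singleton_comm (u := v)]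
  have hrank : ∀ r, Fintype.card F * (Fintype.card F : ℚ) ^ finrank F (perp Q (U ⊔ span F {r})) =
      (Fintype.card F : ℚ) ^ finrank F (perp Q U) * (1 + (Fintype.card F - 1) *
        if r ∈ U then 1 else 0) := by
    intro r
    split_ifs with hr
    · rw [sup_eq_left.2 ((span_singleton_le_iff_mem r U).2 hr)]
      ring
    · have hU := finrank_perp_add_finrank hB U
      have hUr := finrank_perp_add_finrank hB (U ⊔ span F {r})
      rw [finrank_sup_span_singleton hr] at hUr
      rw [mul_zero, add_zero, mul_one, ← pow_succ']
      congr 1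
      omega
  rw [sum_sumOn, mul_sum, sumOn_eq_sum_ite, sumOn_eq_sum_ite, mul_sum, ← sum_add_distrib, mul_sum]
  refine sum_congr rfl fun r _ => ?_
  rw [hfilter, card_filter_mem_submodule, Nat.cast_pow, mul_left_comm, hrank]
  rw [if_pos mem_top]
  split_ifs <;> ring

end SubspaceSums

section NullWeights

open QuadraticMap Submodule Finset
open scoped Classical

variable [Fintype V] {Q : QuadraticForm F V} {f : V → ℚ} {U : Submodule F V} {n e k : ℕ}

/-- A rational weight on the singular points of `Q` with sum zero over each generator. The weight of
the point `⟨v⟩` is carried by all nonzero multiples of `v`, and all other vectors have weight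
zero. -/
structure IsNullWeight (Q : QuadraticForm F V) (n : ℕ) (f : V → ℚ) : Prop where
  map_zero : f 0 = 0
  map_smul : ∀ (c : F) v, c ≠ 0 → f (c • v) = f v
  eq_zero_of_nonsingular : ∀ v, Q v ≠ 0 → f v = 0
  sumOn_generator : ∀ g, IsGenerator Q n g → sumOn f g = 0

lemma sumOn_perp_eq_sumOn_of_isGenerator {g : Submodule F V} (hg : IsGenerator Q n g)
    (hQw : HasWittIndex Q n) (hf : ∀ v, Q v ≠ 0 → f v = 0) : sumOn f (perp Q g) = sumOn f g := by
  refine (sum_subset (fun v hv => ?_) fun v hv hvg => hf v fun hQv => hvg ?_).symm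
  · simp only [mem_filter_univ] at hv ⊢
    exact hg.1.le_perp hv
  · simp only [mem_filter_univ] at hv ⊢
    exact hg.mem_of_mem_perp hQw hv hQv

namespace IsNullWeight

/- Downward induction on `dim U`: the relation for `U` follows by summing those for the subspaces
`U + ⟨r⟩` over all extending vectors `r`. -/
lemma sumOn_perp [Fintype F] (hf : IsNullWeight Q n f) (hV : finrank F V = 2 * n + e + 1)
    (hQw : HasWittIndex Q n) (hB : Q.polarBilin.Nondegenerate) (hU : TotallySingular Q U)
    (hUk : finrank F U + k = n) :
    sumOn f (perp Q U) = -(Fintype.card F : ℚ) ^ (k + e) * sumOn f U := by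
  induction k generalizing U with
  | zero =>
    have hg : IsGenerator Q n U := ⟨hU, hUk⟩
    rw [sumOn_perp_eq_sumOn_of_isGenerator hg hQw hf.eq_zero_of_nonsingular,
      hf.sumOn_generator U hg, mul_zero]
  | succ k ih =>
    have hTS := fun r (hr : r ∈ extendingVectors Q U) => hU.sup_extendingVector hr
    have hrank : ∀ r ∈ extendingVectors Q U, finrank F ↥(U ⊔ span F {r}) + k = n := fun r hr => by
      rw [finrank_sup_span_singleton (mem_extendingVectors.1 hr).2]
      omega
    have hcard := fun r hr => (hTS r hr).card_singularPerp (hrank r hr) hV hQw hB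
    have hsum := sum_congr rfl fun r hr => ih (hTS r hr) (hrank r hr)
    rw [← mul_sum, sum_extendingVectors_sumOn_sup hU hf.eq_zero_of_nonsingular,
      sum_extendingVectors_sumOn_perp_sup hU hf.eq_zero_of_nonsingular hcard,
      hU.card_singularPerp hUk hV hQw hB] at hsum
    have hq : (1 : ℚ) < Fintype.card F := mod_cast Fintype.one_lt_card
    generalize (Fintype.card F : ℚ) = q at hsum hq ⊢
    generalize finrank F U = d at hUk hsum
    subst hUk
    have hpos : 0 < q ^ (d + (k + 1) + e + k) - q ^ (d + k + e) + (q ^ (d + (k + 1)) - q ^ d) :=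
      add_pos (sub_pos.2 (pow_lt_pow_right₀ hq (by omega)))
        (sub_pos.2 (pow_lt_pow_right₀ hq (by omega)))
    refine mul_left_cancel₀ hpos.ne' ?_
    linear_combination hsum

lemma sumOn_top [Finite F] (hf : IsNullWeight Q n f) (hV : finrank F V = 2 * n + e + 1)
    (hQw : HasWittIndex Q n) (hB : Q.polarBilin.Nondegenerate) :
    sumOn f (⊤ : Submodule F V) = 0 := by
  have := Fintype.ofFinite F
  have hbot : TotallySingular Q ⊥ := fun v hv => by rw [(mem_bot F).1 hv, QuadraticMap.map_zero]
  have h := hf.sumOn_perp hV hQw hB hbot (by rw [finrank_bot, zero_add])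
  rwa [perp_bot, sumOn_bot, hf.map_zero, mul_zero] at h

lemma sumOn_perp_of_singular [Fintype F] (hf : IsNullWeight Q n f) (hV : finrank F V = 2 * n + 2)
    (hQw : HasWittIndex Q n) (hB : Q.polarBilin.Nondegenerate) {v : V} (hv : Q v = 0) :
    sumOn f (perp Q (span F {v})) = -((Fintype.card F - 1) * (Fintype.card F : ℚ) ^ n) * f v := by
  rcases eq_or_ne v 0 with rfl | hv0
  · rw [span_zero_singleton, perp_bot, hf.sumOn_top hV hQw hB, hf.map_zero, mul_zero]
  have hTS := totallySingular_span_singleton hv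
  have hrank := finrank_span_singleton (K := F) hv0
  obtain ⟨k, rfl⟩ : ∃ k, n = 1 + k := Nat.exists_eq_add_of_le (hrank ▸ hQw.1 _ hTS)
  rw [hf.sumOn_perp hV hQw hB hTS (k := k) (by rw [hrank]),
    sumOn_span_singleton hf.map_zero hf.map_smul]
  ring

lemma sum_sq_sumOn_perp [Fintype F] (hf : IsNullWeight Q n f) (hV : finrank F V = 2 * n + 2)
    (hQw : HasWittIndex Q n) (hB : Q.polarBilin.Nondegenerate) :
    ∑ v, sumOn f (perp Q (span F {v})) ^ 2 =
      ((Fintype.card F - 1) * (Fintype.card F : ℚ) ^ n) ^ 2 * ∑ v, f v ^ 2 := by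
  have hswap : ∑ v, sumOn f (perp Q (span F {v})) ^ 2 =
      ∑ r, f r * ∑ v with v ∈ perp Q (span F {r}), sumOn f (perp Q (span F {v})) := by
    simp only [mul_sum, sum_filter]
    rw [sum_comm]
    refine sum_congr rfl fun v _ => ?_
    rw [pow_two]
    nth_rw 1 [sumOn_eq_sum_ite]
    simp only [sum_mul, mem_perp_span_singleton_comm (u := v), ite_mul, mul_ite, zero_mul, mul_zero]
  rw [hswap, mul_sum]
  refine sum_congr rfl fun r _ => ?_
  rcases eq_or_ne r 0 with rfl | hr
  · rw [hf.map_zero]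
    ring
  have hrank : finrank F (perp Q (span F {r})) = 2 * n + 1 := by
    have := finrank_perp_add_finrank hB (span F {r})
    rw [finrank_span_singleton hr] at this
    omega
  have hsum := card_mul_sum_perp_sumOn_perp hB f (span F {r})
  rw [hrank, hf.sumOn_top hV hQw hB, sumOn_span_singleton hf.map_zero hf.map_smul] at hsum
  have hq : (Fintype.card F : ℚ) ≠ 0 := mod_cast Fintype.card_ne_zero
  refine mul_left_cancel₀ hq ?_
  linear_combination f r * hsum

/- The identity holds at singular vectors, which support `f`, and both sides have the same `ℓ²`
norm, so it holds everywhere. -/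
lemma sumOn_perp_span_singleton [Fintype F] (hf : IsNullWeight Q n f) (hV : finrank F V = 2 * n + 2)
    (hQw : HasWittIndex Q n) (hB : Q.polarBilin.Nondegenerate) (v : V) :
    sumOn f (perp Q (span F {v})) = -((Fintype.card F - 1) * (Fintype.card F : ℚ) ^ n) * f v := by
  set c : ℚ := (Fintype.card F - 1) * (Fintype.card F : ℚ) ^ n
  have hmul : ∀ v, f v * sumOn f (perp Q (span F {v})) = -c * f v ^ 2 := by
    intro v
    by_cases hv : Q v = 0
    · rw [hf.sumOn_perp_of_singular hV hQw hB hv]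
      ring
    · simp [hf.eq_zero_of_nonsingular v hv]
  have hzero : ∑ v, (sumOn f (perp Q (span F {v})) + c * f v) ^ 2 = 0 := by
    have hexpand : ∀ v, (sumOn f (perp Q (span F {v})) + c * f v) ^ 2 =
        sumOn f (perp Q (span F {v})) ^ 2 - c ^ 2 * f v ^ 2 := fun v => by
      linear_combination 2 * c * hmul v
    rw [sum_congr rfl fun v _ => hexpand v, sum_sub_distrib, ← mul_sum,
      hf.sum_sq_sumOn_perp hV hQw hB, sub_self]
  have hv := (sum_eq_zero_iff_of_nonneg fun v _ => sq_nonneg _).1 hzero v (mem_univ v)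
  linear_combination pow_eq_zero_iff two_ne_zero |>.1 hv

lemma sumOn_eq_zero_of_perp [Finite F] (hf : IsNullWeight Q n f) (hV : finrank F V = 2 * n + 2)
    (hQw : HasWittIndex Q n) (hB : Q.polarBilin.Nondegenerate) (hU : ∀ v ∈ perp Q U, f v = 0) :
    sumOn f U = 0 := by
  have := Fintype.ofFinite F
  have hsum := card_mul_sum_perp_sumOn_perp hB f U
  have hterm : ∀ v ∈ ({v | v ∈ perp Q U} : Finset V), sumOn f (perp Q (span F {v})) = 0 :=
    fun v hv => by rw [hf.sumOn_perp_span_singleton hV hQw hB, hU v (by simpa using hv), mul_zero]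
  rw [sum_eq_zero hterm, hf.sumOn_top hV hQw hB, mul_zero, zero_add, zero_eq_mul] at hsum
  have hq : (1 : ℚ) < Fintype.card F := mod_cast Fintype.one_lt_card
  have hpow : (Fintype.card F : ℚ) ^ finrank F (perp Q U) ≠ 0 := by positivity
  exact (mul_eq_zero.1 (hsum.resolve_left hpow)).resolve_left (sub_pos.2 hq).ne'

end IsNullWeight

end NullWeights

section PointWeights

open Submodule Finset
open scoped Classical

variable {Q : QuadraticForm F V} {H P U : Submodule F V} {T : Set (Submodule F V)} {v : V}

/-- The points of the quadric outside its section by `H`. -/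
def singularPointsOff (Q : QuadraticForm F V) (H : Submodule F V) : Set (Submodule F V) :=
  {P | IsSingularPoint Q P ∧ ¬ P ≤ H}

/-- The indicator function of a set `T` of points, as a weight on vectors: it is `1` on the nonzero
vectors of each point of `T`, and `0` elsewhere. -/
def pointWeight (T : Set (Submodule F V)) (v : V) : ℚ :=
  if v ≠ 0 ∧ span F {v} ∈ T then 1 else 0

lemma IsSingularPoint.finrank_eq_one (hP : IsSingularPoint Q P) : finrank F P = 1 := by
  obtain ⟨v, hv, -, rfl⟩ := hP
  exact finrank_span_singleton hv

lemma span_singleton_eq_iff_mem_of_finrank_eq_one (hP : finrank F P = 1) (hv : v ≠ 0) :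
    span F {v} = P ↔ v ∈ P := by
  have := FiniteDimensional.of_finrank_pos (hP ▸ one_pos)
  rw [← span_singleton_le_iff_mem]
  exact ⟨fun h => h.le, fun h => eq_of_le_of_finrank_eq h (by rw [hP, finrank_span_singleton hv])⟩

lemma span_singleton_mem_singularPointsOff :
    span F {v} ∈ singularPointsOff Q H ↔ Q v = 0 ∧ v ∉ H := by
  rw [singularPointsOff, Set.mem_ofPred_eq, span_singleton_le_iff_mem]
  refine and_congr_left fun hvH => ⟨fun ⟨w, _, hQw, hspan⟩ => ?_, fun hQv => ?_⟩
  · exact totallySingular_span_singleton hQw v (hspan ▸ mem_span_singleton_self v)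
  · exact ⟨v, fun h => hvH (h ▸ H.zero_mem), hQv, rfl⟩

lemma pointWeight_zero (T : Set (Submodule F V)) : pointWeight T 0 = 0 := by
  simp [pointWeight]

lemma pointWeight_smul (T : Set (Submodule F V)) {c : F} (hc : c ≠ 0) (v : V) :
    pointWeight T (c • v) = pointWeight T v := by
  simp only [pointWeight, ne_eq, smul_eq_zero, hc, false_or,
    span_singleton_smul_eq (IsUnit.mk0 c hc)]

lemma pointWeight_eq_zero_of_nonsingular (hT : T ⊆ singularPointsOff Q H) (hv : Q v ≠ 0) :
    pointWeight T v = 0 :=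
  if_neg fun h => hv (span_singleton_mem_singularPointsOff.1 (hT h.2)).1

lemma pointWeight_eq_zero_of_mem (hT : T ⊆ singularPointsOff Q H) (hv : v ∈ H) :
    pointWeight T v = 0 :=
  if_neg fun h => (span_singleton_mem_singularPointsOff.1 (hT h.2)).2 hv

lemma finrank_inf_add_one_of_not_le [FiniteDimensional F V] (hH : finrank F H + 1 = finrank F V)
    (hU : ¬ U ≤ H) : finrank F ↥(U ⊓ H) + 1 = finrank F U := by
  have hlt := finrank_lt_finrank_of_lt (right_lt_sup.2 hU)
  have hle := finrank_le (U ⊔ H)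
  have hmod := finrank_sup_add_finrank_inf_eq U H
  omega

variable [Fintype F] [Fintype V]

lemma card_filter_span_singleton_eq (hP : finrank F P = 1) :
    #{v : V | v ≠ 0 ∧ span F {v} = P} + 1 = Fintype.card F := by
  have hfilter : ({v : V | v ≠ 0 ∧ span F {v} = P} : Finset V) =
      {v ∈ ({v | v ∈ P} : Finset V) | v ∉ (⊥ : Submodule F V)} := by
    ext v
    simp only [mem_filter, mem_univ, true_and, mem_bot, and_comm (b := ¬v = 0)]
    exact and_congr_right (span_singleton_eq_iff_mem_of_finrank_eq_one hP)
  have hcount := (card_filter_notMem_add (U := (⊥ : Submodule F V)) fun v hv =>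
    (mem_filter_univ v).2 ((bot_le : ⊥ ≤ P) hv)).trans (card_filter_mem_submodule P)
  rwa [finrank_bot, hP, pow_zero, pow_one, ← hfilter] at hcount

lemma sumOn_pointWeight (hT : ∀ P ∈ T, finrank F P = 1) (U : Submodule F V) :
    sumOn (pointWeight T) U = (Fintype.card F - 1) * {P ∈ T | P ≤ U}.ncard := by
  have hpoints : ∀ v : V, (if v ∈ U then pointWeight T v else 0) =
      ∑ P ∈ (Set.toFinite {P ∈ T | P ≤ U}).toFinset, if v ≠ 0 ∧ span F {v} = P then 1 else 0 := by
    intro v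
    simp only [pointWeight, ite_and, sum_ite_irrel, sum_const_zero, sum_ite_eq,
      Set.Finite.mem_toFinset, Set.mem_sep_iff, span_singleton_le_iff_mem]
    split_ifs <;> rfl
  have hcard : ∀ P ∈ (Set.toFinite {P ∈ T | P ≤ U}).toFinset,
      (#{v : V | v ≠ 0 ∧ span F {v} = P} : ℚ) = Fintype.card F - 1 := fun P hP => by
    rw [eq_sub_iff_add_eq]
    exact_mod_cast card_filter_span_singleton_eq (hT P ((Set.Finite.mem_toFinset _).1 hP).1)
  rw [sumOn_eq_sum_ite, sum_congr rfl fun v _ => hpoints v, sum_comm]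
  simp only [sum_boole]
  rw [sum_congr rfl hcard, sum_const, nsmul_eq_mul, Set.ncard_eq_toFinset_card, mul_comm]

lemma TotallySingular.sumOn_pointWeight_singularPointsOff (hU : TotallySingular Q U)
    (hH : finrank F H + 1 = finrank F V) (hUH : ¬ U ≤ H) :
    Fintype.card F * sumOn (pointWeight (singularPointsOff Q H)) U =
      (Fintype.card F - 1) * (Fintype.card F : ℚ) ^ finrank F U := by
  have hsum : sumOn (pointWeight (singularPointsOff Q H)) U =
      #{v ∈ ({v | v ∈ U} : Finset V) | v ∉ U ⊓ H} := by
    simp only [sumOn, pointWeight, sum_boole]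
    congr 2
    refine filter_congr fun v hv => ?_
    rw [mem_filter_univ] at hv
    rw [span_singleton_mem_singularPointsOff, Submodule.mem_inf]
    exact ⟨fun h h' => h.2.2 h'.2, fun h => ⟨fun h0 => h (h0 ▸ (U ⊓ H).zero_mem), hU v hv,
      fun hvH => h ⟨hv, hvH⟩⟩⟩
  have hcount := (card_filter_notMem_add (U := U ⊓ H) fun v hv => (mem_filter_univ v).2
    (mem_inf.1 hv).1).trans (card_filter_mem_submodule U)
  rw [← finrank_inf_add_one_of_not_le hH hUH] at hcount ⊢
  qify at hcount
  rw [hsum, eq_sub_of_add_eq hcount]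
  ring

end PointWeights

section RelativeOvoids

open QuadraticMap Submodule

variable {Q : QuadraticForm F V} {H L U P P' X : Submodule F V} {R : Set (Submodule F V)} {n m : ℕ}

namespace IsRelativeMOvoid

lemma subset_singularPointsOff (hR : IsRelativeMOvoid Q n H m R) : R ⊆ singularPointsOff Q H :=
  hR.1

/- On a generator outside `H`, the second weight has average `(q - 1) / q`, and the first one has
sum `(q - 1) m`. -/
lemma isNullWeight [Fintype F] [Fintype V] (hR : IsRelativeMOvoid Q n H m R)
    (hH : finrank F H + 1 = finrank F V) :
    IsNullWeight Q n fun v => pointWeight R v -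
      m * Fintype.card F / (Fintype.card F : ℚ) ^ n * pointWeight (singularPointsOff Q H) v where
  map_zero := by rw [pointWeight_zero, pointWeight_zero, mul_zero, sub_zero]
  map_smul c v hc := by rw [pointWeight_smul R hc, pointWeight_smul _ hc]
  eq_zero_of_nonsingular v hv := by
    rw [pointWeight_eq_zero_of_nonsingular hR.subset_singularPointsOff hv,
      pointWeight_eq_zero_of_nonsingular subset_rfl hv, mul_zero, sub_zero]
  sumOn_generator g hg := by
    by_cases hgH : g ≤ H
    · refine sumOn_eq_zero fun v hv => ?_
      rw [pointWeight_eq_zero_of_mem hR.subset_singularPointsOff (hgH hv),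
        pointWeight_eq_zero_of_mem subset_rfl (hgH hv), mul_zero, sub_zero]
    · have hsum := hg.1.sumOn_pointWeight_singularPointsOff hH hgH
      rw [sumOn_sub_mul, sumOn_pointWeight fun P hP => (hR.1 P hP).1.finrank_eq_one,
        hR.2 g hg hgH, div_mul_eq_mul_div, mul_assoc, hsum, hg.2]
      field_simp
      ring

lemma ncard_of_perp_le [Finite F] [FiniteDimensional F V] (hR : IsRelativeMOvoid Q n H m R)
    (hV : finrank F V = 2 * n + 2) (hQw : HasWittIndex Q n) (hB : Q.polarBilin.Nondegenerate)
    (hH : finrank F H + 1 = finrank F V) (hU : perp Q U ≤ H) :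
    ({P ∈ R | P ≤ U}.ncard : ℚ) = m * Nat.card F / (Nat.card F : ℚ) ^ n *
      {P ∈ singularPointsOff Q H | P ≤ U}.ncard := by
  have := Fintype.ofFinite F
  have := Module.finite_of_finite F (M := V)
  have := Fintype.ofFinite V
  have hsum := (hR.isNullWeight hH).sumOn_eq_zero_of_perp hV hQw hB (U := U) fun v hv => by
    rw [pointWeight_eq_zero_of_mem hR.subset_singularPointsOff (hU hv),
        pointWeight_eq_zero_of_mem subset_rfl (hU hv), mul_zero, sub_zero]
  rw [sumOn_sub_mul, sumOn_pointWeight fun P hP => (hR.1 P hP).1.finrank_eq_one,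
    sumOn_pointWeight fun P hP => hP.1.finrank_eq_one] at hsum
  have hq : (1 : ℚ) < Fintype.card F := mod_cast Fintype.one_lt_card
  rw [Nat.card_eq_fintype_card]
  refine mul_left_cancel₀ (sub_pos.2 hq).ne' ?_
  linear_combination hsum

lemma eq_singularPointsOff_of_forall_mem [Finite F] [FiniteDimensional F V]
    (hR : IsRelativeMOvoid Q n H m R) (hV : finrank F V = 2 * n + 2)
    (hQw : HasWittIndex Q n) (hB : Q.polarBilin.Nondegenerate)
    (hH : finrank F H + 1 = finrank F V) (hU : perp Q U ≤ H)
    (hne : {P ∈ R | P ≤ U}.Nonempty) (hall : ∀ P ∈ singularPointsOff Q H, P ≤ U → P ∈ R) :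
    R = singularPointsOff Q H := by
  have := Module.finite_of_finite F (M := V)
  have hsame : {P ∈ singularPointsOff Q H | P ≤ U} = {P ∈ R | P ≤ U} :=
    Set.Subset.antisymm (fun P hP => ⟨hall P hP.1 hP.2, hP.2⟩)
      fun P hP => ⟨hR.subset_singularPointsOff hP.1, hP.2⟩
  have hratio : m * Nat.card F / (Nat.card F : ℚ) ^ n = 1 := by
    have hlocal := hR.ncard_of_perp_le hV hQw hB hH hU
    rw [hsame] at hlocal
    have hpos : ({P ∈ R | P ≤ U}.ncard : ℚ) ≠ 0 := mod_cast hne.ncard_pos.ne'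
    exact mul_right_cancel₀ hpos (by rw [one_mul, ← hlocal])
  have hglobal := hR.ncard_of_perp_le hV hQw hB hH (perp_top hB ▸ bot_le)
  simp only [hratio, one_mul, le_top, and_true, Set.ofPred_mem_eq, Nat.cast_inj] at hglobal
  exact Set.eq_of_subset_of_ncard_le hR.subset_singularPointsOff hglobal.ge

end IsRelativeMOvoid

lemma IsSingularPoint.eq_or_eq_of_le [FiniteDimensional F V] (hP : IsSingularPoint Q P)
    (hP' : IsSingularPoint Q P') (hX : IsSingularPoint Q X) (hne : P ≠ P') (hL : finrank F L = 2)
    (hLQ : ¬ TotallySingular Q L) (hPL : P ≤ L) (hPL' : P' ≤ L) (hXL : X ≤ L) :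
    X = P ∨ X = P' := by
  have hP1 := hP.finrank_eq_one
  have hP1' := hP'.finrank_eq_one
  obtain ⟨p, -, hQp, rfl⟩ := hP
  obtain ⟨p', hp', hQp', rfl⟩ := hP'
  obtain ⟨x, hx, hQx, rfl⟩ := hX
  have hp'P : p' ∉ span F {p} := fun h =>
    hne ((span_singleton_eq_iff_mem_of_finrank_eq_one hP1 hp').2 h).symm
  have hspan : span F {p} ⊔ span F {p'} = L :=
    eq_of_le_of_finrank_eq (sup_le hPL hPL') (by rw [finrank_sup_span_singleton hp'P, hP1, hL])
  have hpolar : polar Q p p' ≠ 0 := fun h => hLQ <| hspan ▸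
    (totallySingular_span_singleton hQp).sup_span_singleton (mem_perp_span_singleton.2 h) hQp'
  obtain ⟨a, b, rfl⟩ : ∃ a b : F, a • p + b • p' = x :=
    mem_span_pair.1 (by rwa [span_insert, hspan, ← span_singleton_le_iff_mem])
  have hba : b = 0 ∨ a = 0 := by
    simpa [QuadraticMap.map_add (⇑Q), QuadraticMap.map_smul, polar_smul_left, polar_smul_right,
      hQp, hQp', hpolar] using hQx
  rw [span_singleton_eq_iff_mem_of_finrank_eq_one hP1 hx,
    span_singleton_eq_iff_mem_of_finrank_eq_one hP1' hx]
  rcases hba with rfl | rfl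
  · exact .inl (by simpa using smul_mem _ a (mem_span_singleton_self p))
  · exact .inr (by simpa using smul_mem _ b (mem_span_singleton_self p'))

lemma perp_span_singleton_eq_of_forall_polar_eq_zero [FiniteDimensional F V]
    (hB : Q.polarBilin.Nondegenerate) (hH : finrank F H + 1 = finrank F V) {ν : V} (hν0 : ν ≠ 0)
    (hν : ∀ w ∈ H, polar Q ν w = 0) : perp Q (span F {ν}) = H := by
  have hrank := finrank_perp_add_finrank hB (span F {ν})
  rw [finrank_span_singleton hν0] at hrank
  exact (eq_of_le_of_finrank_eq (fun w hw => mem_perp_span_singleton.2 (hν w hw)) (by omega)).symm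

lemma NondegOn.map_ne_zero_of_perp_span_singleton_eq (hHnd : NondegOn Q H) {ν : V} (hν0 : ν ≠ 0)
    (hν : perp Q (span F {ν}) = H) : Q ν ≠ 0 := by
  intro hQν
  have hνH : ν ∈ H := hν ▸ (totallySingular_span_singleton hQν).le_perp (mem_span_singleton_self ν)
  exact hν0 (hHnd ν hνH hQν fun w hw => mem_perp_span_singleton.1 (hν ▸ hw))

lemma IsRelativeHemisystem.eq_empty_of_eq_singularPointsOff [Finite V]
    (hR : IsRelativeHemisystem Q n H R) (h : R = singularPointsOff Q H) : R = ∅ := by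
  have hcompl : {P | IsSingularPoint Q P ∧ ¬ P ≤ H ∧ P ∉ R} = ∅ :=
    Set.eq_empty_of_forall_notMem fun P hP => hP.2.2 (h ▸ ⟨hP.1, hP.2.1⟩)
  rw [← Set.ncard_eq_zero, hR.2, hcompl, Set.ncard_empty]

end RelativeOvoids

theorem statement_9_general [Finite F] {n m : ℕ} (hV : finrank F V = 2 * n + 2)
    {Q : QuadraticForm F V} (hQnd : Nondeg Q) (hQw : HasWittIndex Q n)
    {H : Submodule F V} (hH : finrank F H = 2 * n + 1) (hHnd : NondegOn Q H)
    {ν : V} (hν0 : ν ≠ 0) (hνperp : ∀ w ∈ H, QuadraticMap.polar (⇑Q) ν w = 0)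
    {R : Set (Submodule F V)} (hR : IsRelativeMOvoid Q n H m R)
    {L : Submodule F V} (hL : finrank F L = 2) (hνL : ν ∈ L) :
    {P ∈ R | P ≤ L}.ncard ≤ 1 ∨ R = singularPointsOff Q H := by
  have : FiniteDimensional F V := .of_finrank_pos (by omega)
  have := Module.finite_of_finite F (M := V)
  have hB := hQw.polarBilin_nondegenerate hQnd hV.ge
  have hH1 : finrank F H + 1 = finrank F V := by omega
  have hνH := perp_span_singleton_eq_of_forall_polar_eq_zero hB hH1 hν0 hνperp
  have hLH : perp Q L ≤ H := hνH ▸ perp_anti ((Submodule.span_singleton_le_iff_mem ν L).2 hνL)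
  have hLQ : ¬ TotallySingular Q L := fun h =>
    hHnd.map_ne_zero_of_perp_span_singleton_eq hν0 hνH (h ν hνL)
  refine or_iff_not_imp_left.2 fun htwo => ?_
  obtain ⟨P, P', hP, hP', hne⟩ := (Set.one_lt_ncard_iff (Set.toFinite _)).1 (not_le.1 htwo)
  refine hR.eq_singularPointsOff_of_forall_mem hV hQw hB hH1 hLH ⟨P, hP⟩ fun X hX hXL => ?_
  rcases (hR.1 P hP.1).1.eq_or_eq_of_le (hR.1 P' hP'.1).1 hX.1 hne hL hLQ hP.2 hP'.2 hXL with
    rfl | rfl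
  exacts [hP.1, hP'.1]

/-- If `R` is a relative hemisystem of `Q⁻(2n+1,q)`, `q` even, and `ν` spans the
radical `H^⊥` (so `⟨ν⟩` is the nucleus `N` of `𝒬`), then every line through `N`
contains at most one point of `R`; i.e. `R ∩ R^τ = ∅`. -/
theorem statement_9
    (q n : ℕ) [Fintype F] (hq : Fintype.card F = q) (hn : 2 ≤ n)
    (hV : finrank F V = 2 * n + 2)
    (Q : QuadraticForm F V) (hQnd : Nondeg Q) (hQw : HasWittIndex Q n)
    (H : Submodule F V) (hH : finrank F H = 2 * n + 1) (hHnd : NondegOn Q H)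
    (hq2 : Even q)
    (ν : V) (hν0 : ν ≠ 0) (hνperp : ∀ w ∈ H, QuadraticMap.polar (⇑Q) ν w = 0)
    (hνspan : ∀ v : V, (∀ w ∈ H, QuadraticMap.polar (⇑Q) v w = 0) →
      v ∈ Submodule.span F {ν})
    (R : Set (Submodule F V)) (hR : IsRelativeHemisystem Q n H R) :
    ∀ L : Submodule F V, finrank F L = 2 → ν ∈ L → {P ∈ R | P ≤ L}.ncard ≤ 1 := by
  intro L hL hνL
  obtain ⟨m, hm⟩ := hR.1
  rcases statement_9_general hV hQnd hQw hH hHnd hν0 hνperp hm hL hνL with hle | hall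
  · exact hle
  · have : FiniteDimensional F V := .of_finrank_pos (by omega)
    have := Module.finite_of_finite F (M := V)
    simp [hR.eq_empty_of_eq_singularPointsOff hall]
end
end

section
/- Let s ≠ t be elements of F such that the quadratic forms Q_s = Q + s·l² and Q_t = Q + t·l² both have Witt index n (so both define elliptic quadrics Q⁻(2n+1,q) whose singular points in H are exactly 𝒬). Let A be a relative hemisystem of the elliptic quadric defined by Q_s with respect to 𝒬, let A' be a relative hemisystem of the elliptic quadric defined by Q_t with respect to 𝒬, and set X = A ∪ A' ∪ 𝒬. Then every totally isotropic subspace of (V,B) of dimension n+1 (i.e. every maximal totally isotropic subspace of the symplectic space W(2n+1,q) defined by B) contains exactly (qⁿ − 1)/(q − 1) points of X; that is, X is a (qⁿ−1)/(q−1)-ovoid of W(2n+1,q). -/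
noncomputable section

open Module

variable {F V : Type*} [Field F] [AddCommGroup V] [Module F V]

/-- A relative hemisystem of the elliptic quadric defined by `Q'` with respect to the
parabolic section cut out by `H`: a relative `(q^{n−1}/2)`-ovoid whose size equals the
number of `Q'`-singular points outside `H` not belonging to it. -/
def IsRelHemisystemOf (Q' : QuadraticForm F V) (q n : ℕ) (H : Submodule F V)
    (R : Set (Submodule F V)) : Prop :=
  IsRelativeMOvoid Q' n H (q ^ (n - 1) / 2) R ∧
  R.ncard = {P : Submodule F V | IsSingularPoint Q' P ∧ ¬ P ≤ H ∧ P ∉ R}.ncard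

/-!
Let `W` be totally isotropic of dimension `n + 1`. In characteristic `2` each form `Q_r` of the
pencil is the square of a linear functional on `W`, so its singular vectors in `W` form a
subspace `g_r` of codimension at most `1`; as `Q_r` has Witt index `n`, this is a generator.
Every `g_r` cuts `ker l` in the same subspace `K`, the singular vectors of `Q` in `W ∩ ker l`.
Either `dim K = n`, and then `W` meets neither relative ovoid and its points in `X` are those of
`K`; or `dim K = n - 1`, and then the relative ovoids contribute `q ^ (n - 1)` further points.
-/

lemma ncard_sep_union {α : Type*} [Finite α] {S T : Set α} {p : α → Prop} (hST : Disjoint S T) :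
    {a ∈ S ∪ T | p a}.ncard = {a ∈ S | p a}.ncard + {a ∈ T | p a}.ncard :=
  (congrArg Set.ncard Set.sep_union).trans <|
    Set.ncard_union_eq (hST.mono (Set.sep_subset ..) (Set.sep_subset ..))

lemma ncard_setOf_finrank_eq_one_and_le [Finite F] (U : Submodule F V) :
    {P : Submodule F V | finrank F P = 1 ∧ P ≤ U}.ncard =
      ∑ i ∈ Finset.range (finrank F U), Nat.card F ^ i := by
  have points_eq_image : {P : Submodule F V | finrank F P = 1 ∧ P ≤ U} =
      Submodule.map U.subtype '' {P : Submodule F U | finrank F P = 1} := by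
    ext P
    constructor
    · rintro ⟨hP, hPU⟩
      have hmap := Submodule.map_comap_eq_of_le (f := U.subtype) (by simpa using hPU)
      refine ⟨P.comap U.subtype, ?_, hmap⟩
      rw [Set.mem_ofPred_eq, ← Submodule.finrank_map_subtype_eq, hmap, hP]
    · rintro ⟨P, hP, rfl⟩
      exact ⟨(Submodule.finrank_map_subtype_eq U P).trans hP, Submodule.map_subtype_le U P⟩
  rw [points_eq_image,
    Set.ncard_image_of_injective _ (Submodule.map_injective_of_injective U.injective_subtype),
    ← Projectivization.card_of_finrank F U rfl,
    Nat.card_congr (Projectivization.equivSubmodule F U)]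
  rfl

lemma finrank_inf_ker_add_one {U : Submodule F V} [FiniteDimensional F U] {l : V →ₗ[F] F}
    (hU : ¬ U ≤ LinearMap.ker l) :
    finrank F ↥(U ⊓ LinearMap.ker l) + 1 = finrank F U := by
  have restrict_ne_zero : l.domRestrict U ≠ 0 := fun h ↦
    hU fun v hv ↦ LinearMap.congr_fun h ⟨v, hv⟩
  rw [← Module.Dual.finrank_ker_add_one_of_ne_zero restrict_ne_zero, LinearMap.ker_domRestrict,
    ← Submodule.finrank_map_subtype_eq, Submodule.map_comap_subtype]

lemma isSingularPoint_iff {Q : QuadraticForm F V} {P : Submodule F V} :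
    IsSingularPoint Q P ↔ finrank F P = 1 ∧ TotallySingular Q P := by
  constructor
  · rintro ⟨v, hv, hQv, rfl⟩
    refine ⟨finrank_span_singleton hv, fun w hw ↦ ?_⟩
    obtain ⟨c, rfl⟩ := Submodule.mem_span_singleton.1 hw
    rw [QuadraticMap.map_smul, hQv, smul_zero]
  · rintro ⟨hP, hQP⟩
    obtain ⟨v, hvP, hv, rfl⟩ : ∃ v ∈ P, v ≠ 0 ∧ P = Submodule.span F {v} := by
      let p := Projectivization.mk'' P hP
      have hp : P = Submodule.span F {p.rep} := by
        rw [← p.submodule_eq, Projectivization.submodule_mk'']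
      exact ⟨p.rep, hp ▸ Submodule.mem_span_singleton_self _, p.rep_nonzero, hp⟩
    exact ⟨v, hv, hQP v hvP, rfl⟩

/-- A subspace on which the polar form of `Q` vanishes identically, i.e. a totally isotropic
subspace of the symplectic space defined by `Q` when the characteristic is `2`. -/
def TotallyIsotropic (Q : QuadraticForm F V) (W : Submodule F V) : Prop :=
  ∀ x ∈ W, ∀ y ∈ W, QuadraticMap.polar Q x y = 0

namespace TotallyIsotropic

variable {Q : QuadraticForm F V} {W : Submodule F V}

lemma map_add_eq (hW : TotallyIsotropic Q W) {x y : V} (hx : x ∈ W) (hy : y ∈ W) :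
    Q (x + y) = Q x + Q y := by
  rw [QuadraticMap.map_add Q, hW x hx y hy, add_zero]

/-- The singular vectors of a totally isotropic subspace, as a subspace. -/
def singularPart (hW : TotallyIsotropic Q W) : Submodule F V where
  carrier := {v | v ∈ W ∧ Q v = 0}
  zero_mem' := ⟨W.zero_mem, QuadraticMap.map_zero Q⟩
  add_mem' := by
    rintro x y ⟨hx, hQx⟩ ⟨hy, hQy⟩
    exact ⟨W.add_mem hx hy, by rw [hW.map_add_eq hx hy, hQx, hQy, add_zero]⟩
  smul_mem' := by
    rintro c x ⟨hx, hQx⟩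
    exact ⟨W.smul_mem c hx, by rw [QuadraticMap.map_smul, hQx, smul_zero]⟩

lemma mem_singularPart (hW : TotallyIsotropic Q W) {v : V} :
    v ∈ hW.singularPart ↔ v ∈ W ∧ Q v = 0 :=
  Iff.rfl

lemma le_singularPart_iff (hW : TotallyIsotropic Q W) {U : Submodule F V} :
    U ≤ hW.singularPart ↔ U ≤ W ∧ TotallySingular Q U :=
  forall₂_and

lemma exists_linearMap_sq_eq [CharP F 2] [PerfectRing F 2] (hW : TotallyIsotropic Q W) :
    ∃ φ : W →ₗ[F] F, ∀ w : W, φ w ^ 2 = Q w := by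
  let sqrt := (frobeniusEquiv F 2).symm
  refine ⟨{ toFun w := sqrt (Q w), map_add' x y := ?_, map_smul' c x := ?_ }, fun w ↦
    frobeniusEquiv_symm_pow_p F 2 (Q w)⟩
  · rw [Submodule.coe_add, hW.map_add_eq x.2 y.2, map_add]
  · rw [Submodule.coe_smul, QuadraticMap.map_smul, smul_eq_mul, ← pow_two, map_mul,
      frobeniusEquiv_symm_pow, RingHom.id_apply, smul_eq_mul]

lemma finrank_le_finrank_singularPart_add_one [CharP F 2] [PerfectRing F 2]
    [FiniteDimensional F W] (hW : TotallyIsotropic Q W) :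
    finrank F W ≤ finrank F hW.singularPart + 1 := by
  obtain ⟨φ, hφ⟩ := hW.exists_linearMap_sq_eq
  have map_ker : (LinearMap.ker φ).map W.subtype = hW.singularPart := by
    ext v
    constructor
    · rintro ⟨w, hw, rfl⟩
      exact ⟨w.2, by simp [← hφ, LinearMap.mem_ker.1 hw]⟩
    · rintro ⟨hv, hQv⟩
      exact ⟨⟨v, hv⟩, eq_zero_of_pow_eq_zero ((hφ ⟨v, hv⟩).trans hQv), rfl⟩
  have range_le_one : finrank F (LinearMap.range φ) ≤ 1 := by
    simpa using Submodule.finrank_le (LinearMap.range φ)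
  rw [← φ.finrank_range_add_finrank_ker, ← map_ker, Submodule.finrank_map_subtype_eq]
  lia

lemma isGenerator_singularPart [CharP F 2] [PerfectRing F 2] (hW : TotallyIsotropic Q W) {n : ℕ}
    (hWn : finrank F W = n + 1) (hQ : HasWittIndex Q n) : IsGenerator Q n hW.singularPart := by
  have : FiniteDimensional F W := .of_finrank_pos (by lia)
  have singular : TotallySingular Q hW.singularPart := fun _ hv ↦ hv.2
  have := hW.finrank_le_finrank_singularPart_add_one
  exact ⟨singular, le_antisymm (hQ.1 _ singular) (by lia)⟩

end TotallyIsotropic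

/-- The form `Q_r = Q + r l²` of the pencil of quadratic forms agreeing with `Q` on `ker l`. -/
abbrev pencilForm (Q : QuadraticForm F V) (l : V →ₗ[F] F) (r : F) : QuadraticForm F V :=
  Q + r • QuadraticMap.linMulLin l l

section Pencil

variable {Q : QuadraticForm F V} {l : V →ₗ[F] F} {r s t : F} {W : Submodule F V}

lemma pencilForm_apply (v : V) : pencilForm Q l r v = Q v + r * l v ^ 2 := by
  simp [pow_two]

lemma TotallyIsotropic.pencilForm [CharP F 2] (hW : TotallyIsotropic Q W) :
    TotallyIsotropic (pencilForm Q l r) W := by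
  intro x hx y hy
  rw [QuadraticMap.polar, pencilForm_apply, pencilForm_apply, pencilForm_apply, hW.map_add_eq hx hy,
    map_add, CharTwo.add_sq]
  ring

lemma TotallyIsotropic.singularPart_pencilForm_inf_ker [CharP F 2] (hW : TotallyIsotropic Q W) :
    (hW.pencilForm (l := l) (r := r)).singularPart ⊓ LinearMap.ker l =
      hW.singularPart ⊓ LinearMap.ker l := by
  ext v
  simp +contextual [TotallyIsotropic.mem_singularPart]

lemma TotallySingular.le_ker_of_pencilForm (hst : s ≠ t) {U : Submodule F V}
    (hs : TotallySingular (pencilForm Q l s) U) (ht : TotallySingular (pencilForm Q l t) U) :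
    U ≤ LinearMap.ker l := by
  intro v hv
  have hsv := hs v hv
  have htv := ht v hv
  rw [pencilForm_apply] at hsv htv
  have difference : (s - t) * l v ^ 2 = 0 := by linear_combination hsv - htv
  simpa [sub_eq_zero, hst] using difference

end Pencil

lemma IsRelativeMOvoid.disjoint_of_pencilForm {Q : QuadraticForm F V} {l : V →ₗ[F] F} {s t : F}
    {n m m' : ℕ} {A A' : Set (Submodule F V)} (hst : s ≠ t)
    (hA : IsRelativeMOvoid (pencilForm Q l s) n (LinearMap.ker l) m A)
    (hA' : IsRelativeMOvoid (pencilForm Q l t) n (LinearMap.ker l) m' A') : Disjoint A A' :=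
  Set.disjoint_left.2 fun P hP hP' ↦ (hA.1 P hP).2 <|
    (isSingularPoint_iff.1 (hA.1 P hP).1).2.le_ker_of_pencilForm hst
      (isSingularPoint_iff.1 (hA'.1 P hP').1).2

lemma IsRelativeMOvoid.disjoint_setOf_le {Q Q' : QuadraticForm F V} {H : Submodule F V}
    {n m : ℕ} {R : Set (Submodule F V)} (hR : IsRelativeMOvoid Q' n H m R) :
    Disjoint R {P | IsSingularPoint Q P ∧ P ≤ H} :=
  Set.disjoint_left.2 fun P hP hPH ↦ (hR.1 P hP).2 hPH.2

section Counting

variable {Q : QuadraticForm F V} {W : Submodule F V}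

lemma TotallyIsotropic.ncard_singularPoint_inf [Finite F] (hW : TotallyIsotropic Q W)
    (H : Submodule F V) :
    {P ∈ {P | IsSingularPoint Q P ∧ P ≤ H} | P ≤ W}.ncard =
      ∑ i ∈ Finset.range (finrank F ↥(hW.singularPart ⊓ H)), Nat.card F ^ i := by
  rw [← ncard_setOf_finrank_eq_one_and_le]
  congr 1
  ext P
  simp only [Set.mem_ofPred_eq, isSingularPoint_iff, le_inf_iff, hW.le_singularPart_iff]
  tauto

lemma IsRelativeMOvoid.setOf_le_eq_setOf_le_singularPart {n m : ℕ} {H : Submodule F V}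
    {R : Set (Submodule F V)} (hR : IsRelativeMOvoid Q n H m R) (hW : TotallyIsotropic Q W) :
    {P ∈ R | P ≤ W} = {P ∈ R | P ≤ hW.singularPart} := by
  ext P
  refine and_congr_right fun hP ↦ ?_
  rw [hW.le_singularPart_iff, and_iff_left (isSingularPoint_iff.1 (hR.1 P hP).1).2]

lemma IsRelativeMOvoid.setOf_le_eq_empty {n m : ℕ} {U H : Submodule F V}
    {R : Set (Submodule F V)} (hR : IsRelativeMOvoid Q n H m R) (hU : U ≤ H) :
    {P ∈ R | P ≤ U} = ∅ :=
  Set.eq_empty_of_forall_notMem fun P hP ↦ (hR.1 P hP.1).2 (hP.2.trans hU)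

lemma IsRelativeMOvoid.finrank_inf_ker_and_ncard_le [FiniteDimensional F V] [CharP F 2]
    [PerfectRing F 2] {l : V →ₗ[F] F} {r : F} {n m : ℕ} {R : Set (Submodule F V)}
    (hR : IsRelativeMOvoid (pencilForm Q l r) n (LinearMap.ker l) m R)
    (hQr : HasWittIndex (pencilForm Q l r) n)
    (hW : TotallyIsotropic Q W) (hWn : finrank F W = n + 1) :
    (finrank F ↥(hW.singularPart ⊓ LinearMap.ker l) = n ∧ {P ∈ R | P ≤ W}.ncard = 0) ∨
      (finrank F ↥(hW.singularPart ⊓ LinearMap.ker l) + 1 = n ∧ {P ∈ R | P ≤ W}.ncard = m) := by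
  have hWr : TotallyIsotropic (pencilForm Q l r) W := hW.pencilForm
  have generator := hWr.isGenerator_singularPart hWn hQr
  rw [hR.setOf_le_eq_setOf_le_singularPart hWr,
    ← hW.singularPart_pencilForm_inf_ker (l := l) (r := r)]
  by_cases hker : hWr.singularPart ≤ LinearMap.ker l
  · left
    rw [inf_eq_left.2 hker, hR.setOf_le_eq_empty hker, Set.ncard_empty]
    exact ⟨generator.2, rfl⟩
  · right
    exact ⟨(finrank_inf_ker_add_one hker).trans generator.2, hR.2 _ generator hker⟩

end Counting

lemma charP_two_of_even_card [Fintype F] (hF : Even (Fintype.card F)) : CharP F 2 :=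
  ringChar.of_eq (FiniteField.even_card_iff_char_two.2 (Nat.even_iff.1 hF))

theorem statement_14_general
    (q n m m' : ℕ) [Fintype F] (hq : Fintype.card F = q) (hq2 : Even q)
    (hm : m + m' = q ^ (n - 1)) [FiniteDimensional F V]
    (Q : QuadraticForm F V) (l : V →ₗ[F] F) (s t : F) (hst : s ≠ t)
    (hWs : HasWittIndex (pencilForm Q l s) n) (hWt : HasWittIndex (pencilForm Q l t) n)
    (A A' : Set (Submodule F V))
    (hA : IsRelativeMOvoid (pencilForm Q l s) n (LinearMap.ker l) m A)
    (hA' : IsRelativeMOvoid (pencilForm Q l t) n (LinearMap.ker l) m' A')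
    (W : Submodule F V) (hW : TotallyIsotropic Q W) (hWn : finrank F W = n + 1) :
    {P ∈ A ∪ A' ∪ {P | IsSingularPoint Q P ∧ P ≤ LinearMap.ker l} | P ≤ W}.ncard =
      (q ^ n - 1) / (q - 1) := by
  subst hq
  have : CharP F 2 := charP_two_of_even_card hq2
  have : Finite V := Module.finite_of_finite F
  rw [← Nat.geomSum_eq Fintype.one_lt_card,
    ncard_sep_union (hA.disjoint_setOf_le.union_left hA'.disjoint_setOf_le),
    ncard_sep_union (hA.disjoint_of_pencilForm hst hA'), hW.ncard_singularPoint_inf,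
    Nat.card_eq_fintype_card]
  rcases hA.finrank_inf_ker_and_ncard_le hWs hW hWn with ⟨hK, hAW⟩ | ⟨hK, hAW⟩ <;>
    rcases hA'.finrank_inf_ker_and_ncard_le hWt hW hWn with ⟨hK', hAW'⟩ | ⟨hK', hAW'⟩
  · rw [hAW, hAW', hK, zero_add, zero_add]
  · lia
  · lia
  · rw [hAW, hAW', hm, ← hK, Finset.sum_range_succ, Nat.add_sub_cancel, add_comm]

/-- Gluing relative hemisystems `A`, `A'` of two elliptic quadrics `Q_s`, `Q_t` of the
pencil through `𝒬` together with `𝒬` itself yields a set `X` meeting every maximal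
totally isotropic subspace of the symplectic space `W(2n+1,q)` defined by the common
polar form `B` in exactly `(qⁿ − 1)/(q − 1)` points: `X` is a
`(qⁿ−1)/(q−1)`-ovoid of `W(2n+1,q)`. -/
theorem statement_14
    (q n : ℕ) [Fintype F] (hq : Fintype.card F = q) (hq2 : Even q) (hn : 2 ≤ n)
    (hV : finrank F V = 2 * n + 2)
    (Q : QuadraticForm F V) (hQnd : Nondeg Q) (hQw : HasWittIndex Q n)
    (l : V →ₗ[F] F) (hl : l ≠ 0) (hHnd : NondegOn Q (LinearMap.ker l))
    (s t : F) (hst : s ≠ t)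
    (hWs : HasWittIndex (Q + s • QuadraticMap.linMulLin l l) n)
    (hWt : HasWittIndex (Q + t • QuadraticMap.linMulLin l l) n)
    (A Aa : Set (Submodule F V))
    (hA : IsRelHemisystemOf (Q + s • QuadraticMap.linMulLin l l) q n (LinearMap.ker l) A)
    (hAa : IsRelHemisystemOf (Q + t • QuadraticMap.linMulLin l l) q n (LinearMap.ker l) Aa)
    (X : Set (Submodule F V))
    (hX : X = A ∪ Aa ∪
      {P : Submodule F V | IsSingularPoint Q P ∧ P ≤ LinearMap.ker l}) :
    ∀ W : Submodule F V, (∀ x ∈ W, ∀ y ∈ W, QuadraticMap.polar (⇑Q) x y = 0) →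
      finrank F W = n + 1 →
      {P ∈ X | P ≤ W}.ncard = (q ^ n - 1) / (q - 1) := by
  have : FiniteDimensional F V := .of_finrank_pos (by lia)
  have halves : q ^ (n - 1) / 2 + q ^ (n - 1) / 2 = q ^ (n - 1) := by
    rw [← two_mul, Nat.two_mul_div_two_of_even (hq2.pow_of_ne_zero (by lia))]
  subst hX
  exact statement_14_general q n _ _ hq hq2 halves Q l s t hst hWs hWt A Aa hA.1 hAa.1
end
end
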